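/- arXiv:1506.08563 — 3 statements merged into one kernel-verified Lean document; each statement's English description precedes it below -/
import Mathlib

section
/- Correctness of the cumulative/volatile decomposition (content of Theorem 1, correctness of the stack schema): for a sequence (F 1, …, F n) of clause sets with n ≥ 2, let C j be the set of clauses cumulative in F j relative to the full sequence and let V i be the set of clauses volatile in F i relative to the full sequence. Then for every index 1 ≤ i ≤ n: F i equals the union of C 1, …, C i and V i, and the sets C 1, …, C i, V i are pairwise disjoint. -/
/-! A clause `c ∈ F i` either is missing from some later set, and is then volatile in `F i`, or
stays up to `F n`; in the latter case it is cumulative at the start of the run of consecutive sets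
containing `c` that ends at `F n` (`exists_cumulative_le`). Conversely, a clause cumulative in
`F j` lies in every `F k` with `j ≤ k ≤ n` (`Cumulative.mem_of_le`). This gives the other
inclusion and both disjointness claims: such a clause cannot be absent from `F (k - 1)` for
`j < k ≤ n`, nor from any set after `F i` when `j ≤ i`. -/

/-- `c` is volatile in `F i` relative to the subsequence `(F 1, …, F m)`:
`c ∈ F i` and there is `j` with `i < j ≤ m` and `c ∉ F j`. -/
def Volatile {α : Type*} (F : ℕ → Finset α) (m i : ℕ) (c : α) : Prop :=
  c ∈ F i ∧ ∃ j, i < j ∧ j ≤ m ∧ c ∉ F j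

/-- `c` is cumulative in `F i` relative to the subsequence `(F 1, …, F m)`:
`c ∈ F i`, `c` appears for the first time in `F i`, and `c ∈ F j` for all `i < j ≤ m`. -/
def Cumulative {α : Type*} (F : ℕ → Finset α) (m i : ℕ) (c : α) : Prop :=
  c ∈ F i ∧ (i = 1 ∨ c ∉ F (i - 1)) ∧ ∀ j, i < j → j ≤ m → c ∈ F j
theorem Cumulative.mem_of_le {α : Type*} {F : ℕ → Finset α} {n j k : ℕ} {c : α}
    (h : Cumulative F n j c) (hjk : j ≤ k) (hkn : k ≤ n) : c ∈ F k := by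
  rcases hjk.eq_or_lt with rfl | hlt
  · exact h.1
  · exact h.2.2 k hlt hkn

/-- Walking back from `i` through consecutive sets containing `c` reaches the index where the
final uninterrupted run of `c` begins; there `c` is cumulative. -/
theorem exists_cumulative_le {α : Type*} (F : ℕ → Finset α) (n : ℕ) (c : α) (i : ℕ) (hi : 1 ≤ i)
    (hc : c ∈ F i) (h : ∀ j, i < j → j ≤ n → c ∈ F j) :
    ∃ j, (1 ≤ j ∧ j ≤ i) ∧ Cumulative F n j c := by
  induction i, hi using Nat.le_induction with
  | base => exact ⟨1, ⟨le_rfl, le_rfl⟩, hc, Or.inl rfl, h⟩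
  | succ i hi ih =>
    by_cases hci : c ∈ F i
    · obtain ⟨j, ⟨hj, hji⟩, hcum⟩ := ih hci fun j hij hjn => by
        rcases (Nat.succ_le_of_lt hij).eq_or_lt with rfl | hlt
        · exact hc
        · exact h j hlt hjn
      exact ⟨j, ⟨hj, by omega⟩, hcum⟩
    · exact ⟨i + 1, ⟨by omega, le_rfl⟩, hc, Or.inr hci, h⟩

/-- Correctness of the cumulative/volatile decomposition (Theorem 1, stack schema):
F i is the disjoint union of C 1, ..., C i and V i. -/
theorem cumulative_volatile_decomposition {α : Type*} (F : ℕ → Finset α) (n : ℕ) (hn : 2 ≤ n)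
    (C V : ℕ → Set α)
    (hC : ∀ j c, c ∈ C j ↔ Cumulative F n j c)
    (hV : ∀ i c, c ∈ V i ↔ Volatile F n i c)
    (i : ℕ) (hi : 1 ≤ i) (hin : i ≤ n) :
    ((F i : Set α) = (⋃ j ∈ Set.Icc 1 i, C j) ∪ V i) ∧
      (∀ j k, 1 ≤ j → j < k → k ≤ i → Disjoint (C j) (C k)) ∧
      (∀ j, 1 ≤ j → j ≤ i → Disjoint (C j) (V i)) := by
  refine ⟨?_, ?_, ?_⟩
  · ext c
    simp only [Finset.mem_coe, Set.mem_union, Set.mem_iUnion, Set.mem_Icc, exists_prop, hC, hV]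
    constructor
    · intro hc
      by_cases h : ∀ j, i < j → j ≤ n → c ∈ F j
      · obtain ⟨j, hj, hcum⟩ := exists_cumulative_le F n c i hi hc h
        exact Or.inl ⟨j, hj, hcum⟩
      · push Not at h
        exact Or.inr ⟨hc, h⟩
    · rintro (⟨j, ⟨-, hji⟩, hcum⟩ | hvol)
      · exact hcum.mem_of_le hji hin
      · exact hvol.1
  · intro j k hj hjk hki
    rw [Set.disjoint_left]
    intro c hcj hck
    rw [hC] at hcj hck
    rcases hck.2.1 with hk | hk
    · omega
    · exact hk (hcj.mem_of_le (by omega) (by omega))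
  · intro j _ hji
    rw [Set.disjoint_left]
    intro c hcj hcv
    rw [hC] at hcj
    rw [hV] at hcv
    obtain ⟨-, k, hik, hkn, hck⟩ := hcv
    exact hck (hcj.mem_of_le (by omega) hkn)
end

section
/- One pop, one add, one push per step suffices: for a sequence (F 1, …, F n) of clause sets with n ≥ 2, let C j be the set of clauses cumulative in F j relative to the full sequence and V i the set of clauses volatile in F i relative to the full sequence. Then for every index 1 ≤ i < n: F (i+1) equals the union of (F i \ V i), C (i+1), and V (i+1), and these three sets are pairwise disjoint. -/
/-- One pop, one add, one push per step suffices: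
F (i+1) is the disjoint union of F i minus V i, C (i+1) and V (i+1). -/
theorem step_decomposition {α : Type*} (F : ℕ → Finset α) (n : ℕ) (hn : 2 ≤ n)
    (C V : ℕ → Set α)
    (hC : ∀ j c, c ∈ C j ↔ Cumulative F n j c)
    (hV : ∀ i c, c ∈ V i ↔ Volatile F n i c)
    (i : ℕ) (hi : 1 ≤ i) (hin : i < n) :
    ((F (i + 1) : Set α) = ((F i : Set α) \ V i) ∪ C (i + 1) ∪ V (i + 1)) ∧
      Disjoint ((F i : Set α) \ V i) (C (i + 1)) ∧
      Disjoint ((F i : Set α) \ V i) (V (i + 1)) ∧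
      Disjoint (C (i + 1)) (V (i + 1)) := by
  have keep : ∀ c, c ∈ (F i : Set α) \ V i ↔ c ∈ F i ∧ ∀ j, i < j → j ≤ n → c ∈ F j := by
    intro c
    simp only [Set.mem_sdiff, Finset.mem_coe, hV, Volatile]
    grind
  refine ⟨?_, ?_, ?_, ?_⟩
  · ext c
    simp only [Set.mem_union, keep, hC, hV, Cumulative, Volatile, Finset.mem_coe,
      Nat.add_sub_cancel]
    constructor
    · intro hc
      by_cases hv : ∃ j, i + 1 < j ∧ j ≤ n ∧ c ∉ F j
      · exact Or.inr ⟨hc, hv⟩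
      · push Not at hv
        by_cases hci : c ∈ F i
        · refine Or.inl (Or.inl ⟨hci, fun j hj hjn => ?_⟩)
          rcases Nat.eq_or_lt_of_le (Nat.succ_le_of_lt hj) with rfl | h
          · exact hc
          · exact hv j h hjn
        · exact Or.inl (Or.inr ⟨hc, Or.inr hci, hv⟩)
    · rintro ((⟨-, h⟩ | ⟨h, -⟩) | ⟨h, -⟩)
      · exact h (i + 1) (Nat.lt_succ_self i) hin
      · exact h
      · exact h
  · refine Set.disjoint_left.2 fun c h h' => ?_
    obtain ⟨-, h₁ | h₁, -⟩ := (hC _ _).1 h'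
    · omega
    · exact h₁ h.1
  · refine Set.disjoint_left.2 fun c h h' => ?_
    obtain ⟨-, j, hj, hjn, hcj⟩ := (hV _ _).1 h'
    exact hcj (((keep c).1 h).2 j (by omega) hjn)
  · refine Set.disjoint_left.2 fun c h h' => ?_
    obtain ⟨-, j, hj, hjn, hcj⟩ := (hV _ _).1 h'
    exact hcj (((hC _ _).1 h).2.2 j hj hjn)
end

section
/- The reclassification claim from the proof of Theorem 1: for a sequence (F 1, …, F n) of clause sets with n ≥ 2 and an index 2 ≤ i ≤ n−1, a clause c satisfies c ∈ (F i \ F (i+1)) ∩ F (i−1) if and only if there exists an index j < i such that c is cumulative in F j relative to the subsequence (F 1, …, F i) and c is volatile in F j relative to the subsequence (F 1, …, F (i+1)). -/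
/-- A clause of `F k` has a run of consecutive occurrences ending at `k`; its starting index `j` is
where the clause is new. -/
theorem exists_start_of_run {α : Type*} (F : ℕ → Finset α) (c : α) (k : ℕ) (hk : 1 ≤ k)
    (hc : c ∈ F k) :
    ∃ j, 1 ≤ j ∧ j ≤ k ∧ (j = 1 ∨ c ∉ F (j - 1)) ∧ ∀ l, j ≤ l → l ≤ k → c ∈ F l := by
  induction k, hk using Nat.le_induction with
  | base =>
    refine ⟨1, le_rfl, le_rfl, Or.inl rfl, fun l h1 h2 => ?_⟩
    rwa [le_antisymm h2 h1]
  | succ k hk ih =>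
    by_cases h : c ∈ F k
    · obtain ⟨j, hj1, hjk, hnew, hrun⟩ := ih h
      refine ⟨j, hj1, by omega, hnew, fun l h1 h2 => ?_⟩
      rcases Nat.lt_or_ge k l with hl | hl
      · rwa [show l = k + 1 by omega]
      · exact hrun l h1 hl
    · refine ⟨k + 1, by omega, le_rfl, Or.inr h, fun l h1 h2 => ?_⟩
      rwa [le_antisymm h2 h1]

/-- The reclassification claim from the proof of Theorem 1. -/
theorem reclassification_claim {α : Type*} (F : ℕ → Finset α) (n : ℕ) (hn : 2 ≤ n)
    (i : ℕ) (hi : 2 ≤ i) (hin : i ≤ n - 1) (c : α) :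
    c ∈ ((F i : Set α) \ (F (i + 1) : Set α)) ∩ (F (i - 1) : Set α) ↔
      ∃ j, 1 ≤ j ∧ j < i ∧ Cumulative F i j c ∧ Volatile F (i + 1) j c := by
  constructor
  · rintro ⟨⟨hci, hcs⟩, hcp⟩
    obtain ⟨j, hj1, hjk, hnew, hrun⟩ := exists_start_of_run F c (i - 1) (by omega) hcp
    have hcj : c ∈ F j := hrun j le_rfl hjk
    refine ⟨j, hj1, by omega, ⟨hcj, hnew, fun l h1 h2 => ?_⟩, hcj, i + 1, by omega, le_rfl, hcs⟩
    rcases Nat.lt_or_ge l i with hl | hl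
    · exact hrun l h1.le (by omega)
    · rw [le_antisymm h2 hl]
      exact hci
  · rintro ⟨j, hj1, hji, ⟨hcj, -, hrun⟩, -, l, hjl, hl, hcl⟩
    -- The volatility witness `l` cannot lie in the range `j < l ≤ i`.
    have hli : l = i + 1 := by
      by_contra hne
      exact hcl (hrun l hjl (by omega))
    subst hli
    refine ⟨⟨hrun i hji le_rfl, hcl⟩, ?_⟩
    -- When `j = i - 1` membership comes from `c ∈ F j` itself.
    rcases Nat.lt_or_ge j (i - 1) with h | h
    · exact hrun (i - 1) h (by omega)
    · rw [show i - 1 = j by omega]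
      exact hcj
end
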